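/- Assume γ>0. Then for every s∈[0,1), P(t;s) → w(s) as t→∞, where w(s)=exp(−∫_s^1 (1−x)^{γ−1}·L(1/(1−x)) dx). -/

import Mathlib

open Real Filter Asymptotics Set MeasureTheory

/-!
Along the flow `y' = f(y)` the substitution `x = y(u)` turns `∫₀ᵗ g(y(u)) du` into
`∫_{y(0)}^{y(t)} (g / f)(x) dx`. With `g = 1` it gives `t = ∫_{y(0)}^{y(t)} dx / f(x)`, so `y(t)`
must leave every compact part of `[0, 1)` and hence tends to `1`. What remains is the integrability
of `g / f` at `1`, i.e. of `v ^ (γ - 1) * L (1 / v)` at `0`: since `L (2 * x) / L x → 1`, the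
function `|L x| / x ^ (γ / 2)` eventually does not increase under `x ↦ 2 * x`, so it is bounded, and
the integrand is dominated by a multiple of `v ^ (γ / 2 - 1)`.
-/

section SlowVariation

/-- Slow variation at infinity in the sense of Karamata. Since a division by `0` gives `0`, the
limit `1` forces `L` to be eventually nonzero; no sign or measurability is imposed on `L`. -/
def IsSlowlyVarying (L : ℝ → ℝ) : Prop :=
  ∀ c > 0, Tendsto (fun x => L (c * x) / L x) atTop (nhds 1)

variable {L M : ℝ → ℝ} {a b c γ ε : ℝ}

theorem IsSlowlyVarying.div (hL : IsSlowlyVarying L) (hM : IsSlowlyVarying M) :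
    IsSlowlyVarying fun x => L x / M x := fun c hc => by
  simpa only [div_div_div_comm, div_one, Pi.div_def] using (hL c hc).div (hM c hc) one_ne_zero

theorem IsSlowlyVarying.eventually_abs_comp_mul_le (hL : IsSlowlyVarying L) (hc : 0 < c)
    {q : ℝ} (hq : 1 < q) : ∀ᶠ x in atTop, |L (c * x)| ≤ q * |L x| := by
  have habs : Tendsto (fun x => |L (c * x) / L x|) atTop (nhds 1) := by
    simpa only [abs_one] using (hL c hc).abs
  filter_upwards [habs.eventually_le_const hq, (hL c hc).eventually_ne one_ne_zero] with x hle hne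
  have hLx : L x ≠ 0 := fun h => hne (by rw [h, div_zero])
  rwa [abs_div, div_le_iff₀ (abs_pos.2 hLx)] at hle

theorem bddAbove_image_Ici_of_eventually_comp_mul_le {h : ℝ → ℝ} (hh : ContinuousOn h (Ici a))
    (hc : 1 < c) (hle : ∀ᶠ x in atTop, h (c * x) ≤ h x) : BddAbove (h '' Ici a) := by
  obtain ⟨N, hN, hN0, haN⟩ :=
    ((eventually_forall_ge_atTop.2 hle).and
      ((eventually_gt_atTop 0).and (eventually_ge_atTop a))).exists
  have hc0 : 0 < c := zero_lt_one.trans hc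
  obtain ⟨C, hC⟩ := isCompact_Icc.bddAbove_image (hh.mono fun x (hx : x ∈ Icc a (c * N)) => hx.1)
  have hbound (n : ℕ) : ∀ x ∈ Icc a (c ^ n * (c * N)), h x ≤ C := by
    induction n with
    | zero =>
      intro x hx
      rw [pow_zero, one_mul] at hx
      exact hC (mem_image_of_mem h hx)
    | succ n ih =>
      intro x hx
      rcases le_or_gt x (c * N) with hxN | hxN
      · exact hC (mem_image_of_mem h ⟨hx.1, hxN⟩)
      · have hNx : N ≤ x / c := by rw [le_div_iff₀' hc0]; exact hxN.le
        have hxn : x / c ≤ c ^ n * (c * N) := by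
          rw [div_le_iff₀' hc0, ← mul_assoc, ← pow_succ']; exact hx.2
        calc h x = h (c * (x / c)) := by rw [mul_div_cancel₀ x hc0.ne']
          _ ≤ h (x / c) := hN _ hNx
          _ ≤ C := ih _ ⟨haN.trans hNx, hxn⟩
  refine ⟨C, forall_mem_image.2 fun x hx => ?_⟩
  have hpow : Tendsto (fun n : ℕ => c ^ n * (c * N)) atTop atTop :=
    (tendsto_pow_atTop_atTop_of_one_lt hc).atTop_mul_const (mul_pos hc0 hN0)
  obtain ⟨n, hn⟩ := (hpow.eventually_ge_atTop x).exists
  exact hbound n x ⟨hx, hn⟩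

theorem IsSlowlyVarying.exists_forall_abs_le_mul_rpow (hL : IsSlowlyVarying L) (ha : 0 < a)
    (hcont : ContinuousOn L (Ici a)) (hε : 0 < ε) : ∃ C, ∀ x ∈ Ici a, |L x| ≤ C * x ^ ε := by
  have hpos : ∀ x ∈ Ici a, 0 < x ^ ε := fun x hx => rpow_pos_of_pos (ha.trans_le hx) ε
  have hquot : ContinuousOn (fun x => |L x| / x ^ ε) (Ici a) :=
    hcont.abs.div (continuousOn_id.rpow_const fun _ _ => Or.inr hε.le) fun x hx => (hpos x hx).ne'
  have hdouble : ∀ᶠ x in atTop, |L (2 * x)| / (2 * x) ^ ε ≤ |L x| / x ^ ε := by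
    filter_upwards [hL.eventually_abs_comp_mul_le two_pos (one_lt_rpow one_lt_two hε),
      eventually_gt_atTop 0] with x hle hx
    rw [mul_rpow two_pos.le hx.le]
    calc |L (2 * x)| / (2 ^ ε * x ^ ε) ≤ 2 ^ ε * |L x| / (2 ^ ε * x ^ ε) := by gcongr
      _ = |L x| / x ^ ε := mul_div_mul_left _ _ (rpow_pos_of_pos two_pos ε).ne'
  obtain ⟨C, hC⟩ := bddAbove_image_Ici_of_eventually_comp_mul_le hquot one_lt_two hdouble
  exact ⟨C, fun x hx => (div_le_iff₀ (hpos x hx)).1 (hC (mem_image_of_mem _ hx))⟩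

theorem IsSlowlyVarying.intervalIntegrable_rpow_mul_comp_one_div (hL : IsSlowlyVarying L)
    (hb : 0 < b) (hcont : ContinuousOn L (Ici (1 / b))) (hγ : 0 < γ) :
    IntervalIntegrable (fun v => v ^ (γ - 1) * L (1 / v)) volume 0 b := by
  obtain ⟨C, hC⟩ := hL.exists_forall_abs_le_mul_rpow (one_div_pos.2 hb) hcont (half_pos hγ)
  have hmaps : MapsTo (fun v => 1 / v) (Ioc 0 b) (Ici (1 / b)) := fun v hv =>
    one_div_le_one_div_of_le hv.1 hv.2
  have hmeas : ContinuousOn (fun v => v ^ (γ - 1) * L (1 / v)) (Ioc 0 b) :=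
    (continuousOn_id.rpow_const fun v hv => Or.inl hv.1.ne').mul
      (hcont.comp (continuousOn_const.div continuousOn_id fun v hv => hv.1.ne') hmaps)
  have hdom : IntervalIntegrable (fun v => C * v ^ (γ / 2 - 1)) volume 0 b :=
    (intervalIntegral.intervalIntegrable_rpow' (by linarith)).const_mul C
  have hle : ∀ v ∈ Ioc 0 b, ‖v ^ (γ - 1) * L (1 / v)‖ ≤ C * v ^ (γ / 2 - 1) := fun v hv => by
    have hv0 : 0 < v := hv.1
    rw [norm_mul, norm_eq_abs, norm_eq_abs, abs_of_pos (rpow_pos_of_pos hv0 _)]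
    calc v ^ (γ - 1) * |L (1 / v)| ≤ v ^ (γ - 1) * (C * (1 / v) ^ (γ / 2)) := by
          gcongr; exact hC _ (hmaps hv)
      _ = C * (v ^ (γ - 1) * v ^ (-(γ / 2))) := by
          rw [one_div, inv_rpow hv0.le, ← rpow_neg hv0.le]; ring
      _ = C * v ^ (γ / 2 - 1) := by rw [← rpow_add hv0]; ring_nf
  rw [← uIoc_of_le hb.le] at hmeas hle
  exact hdom.mono_fun' (hmeas.aestronglyMeasurable measurableSet_uIoc)
    (ae_restrict_of_forall_mem measurableSet_uIoc hle)

theorem IsSlowlyVarying.intervalIntegrable_one_sub_rpow_mul (hL : IsSlowlyVarying L)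
    (hcont : ContinuousOn L (Ici 1)) (hγ : 0 < γ) (ha : a ∈ Icc 0 1) :
    IntervalIntegrable (fun x => (1 - x) ^ (γ - 1) * L (1 / (1 - x))) volume a 1 := by
  have h01 := (hL.intervalIntegrable_rpow_mul_comp_one_div one_pos
    (by rwa [one_div_one]) hγ).comp_sub_left 1
  rw [sub_zero, sub_self] at h01
  exact h01.symm.mono_set (uIcc_subset_uIcc (Icc_subset_uIcc ha) right_mem_uIcc)

theorem continuousOn_one_sub_rpow_mul_comp_one_div (hcont : ContinuousOn L (Ici 1)) (p : ℝ) :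
    ContinuousOn (fun x => (1 - x) ^ p * L (1 / (1 - x))) (Ico 0 1) := by
  have hpos : ∀ x ∈ Ico (0 : ℝ) 1, 0 < 1 - x := fun x hx => sub_pos.2 hx.2
  have hsub : ContinuousOn (fun x : ℝ => 1 - x) (Ico 0 1) := by fun_prop
  refine (hsub.rpow_const fun x hx => Or.inl (hpos x hx).ne').mul
    (hcont.comp (continuousOn_const.div hsub fun x hx => (hpos x hx).ne') fun x hx => ?_)
  exact one_le_one_div (hpos x hx) (sub_le_self 1 hx.1)

end SlowVariation

section AutonomousFlow

variable {y f h : ℝ → ℝ} {a b t₀ t : ℝ}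

theorem integral_comp_mul_of_isIntegralCurveOn (hy : IsIntegralCurveOn y (fun _ => f) (uIcc t₀ t))
    (hf : ContinuousOn f (y '' uIcc t₀ t)) (hh : ContinuousOn h (y '' uIcc t₀ t)) :
    ∫ u in t₀..t, h (y u) * f (y u) = ∫ x in y t₀..y t, h x :=
  intervalIntegral.integral_comp_mul_deriv'' hy.continuousOn
    (fun u hu => ((hy u (Ioo_subset_Icc_self hu)).hasDerivAt
      (Icc_mem_nhds hu.1 hu.2)).hasDerivWithinAt)
    (hf.comp hy.continuousOn (mapsTo_image y _)) hh

theorem integral_comp_mul_of_isIntegralCurveOn_Ici {S : Set ℝ}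
    (hy : IsIntegralCurveOn y (fun _ => f) (Ici t₀)) (hmaps : MapsTo y (Ici t₀) S)
    (hf : ContinuousOn f S) (hh : ContinuousOn h S) (ht : t₀ ≤ t) :
    ∫ u in t₀..t, h (y u) * f (y u) = ∫ x in y t₀..y t, h x := by
  have hsub : uIcc t₀ t ⊆ Ici t₀ := uIcc_of_le ht ▸ Icc_subset_Ici_self
  have himage : y '' uIcc t₀ t ⊆ S := (hmaps.mono_left hsub).image_subset
  exact integral_comp_mul_of_isIntegralCurveOn (hy.mono hsub) (hf.mono himage) (hh.mono himage)

theorem tendsto_of_isIntegralCurveOn_of_pos (hy : IsIntegralCurveOn y (fun _ => f) (Ici t₀))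
    (hmaps : MapsTo y (Ici t₀) (Ico a b)) (hf : ContinuousOn f (Ico a b))
    (hpos : ∀ x ∈ Ico a b, 0 < f x) : Tendsto y atTop (nhds b) := by
  have hinv : ContinuousOn (fun x => (f x)⁻¹) (Ico a b) := hf.inv₀ fun x hx => (hpos x hx).ne'
  have hint : ∀ x ∈ Ico a b, ∀ z ∈ Ico a b, IntervalIntegrable (fun x => (f x)⁻¹) volume x z :=
    fun x hx z hz => (hinv.mono (ordConnected_Ico.uIcc_subset hx hz)).intervalIntegrable
  have htime : ∀ t ≥ t₀, ∫ x in y t₀..y t, (f x)⁻¹ = t - t₀ := fun t ht => by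
    rw [← integral_comp_mul_of_isIntegralCurveOn_Ici hy hmaps hf hinv ht, ← integral_one]
    refine intervalIntegral.integral_congr fun u hu => inv_mul_cancel₀ (hpos _ (hmaps ?_)).ne'
    exact (uIcc_of_le ht ▸ hu).1
  refine tendsto_order.2 ⟨fun c hc => ?_, fun c hc => ?_⟩
  · have h₀ : y t₀ ∈ Ico a b := hmaps self_mem_Ici
    have hd : max c (y t₀) ∈ Ico a b := ⟨h₀.1.trans (le_max_right _ _), max_lt hc h₀.2⟩
    filter_upwards [eventually_ge_atTop t₀,
      eventually_gt_atTop (t₀ + ∫ x in y t₀..max c (y t₀), (f x)⁻¹)] with t ht hlate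
    by_contra! hyc
    have hyt : y t ∈ Ico a b := hmaps ht
    have hnonneg : 0 ≤ ∫ x in y t..max c (y t₀), (f x)⁻¹ :=
      intervalIntegral.integral_nonneg (hyc.trans (le_max_left _ _)) fun x hx =>
        (inv_pos.2 (hpos x ⟨hyt.1.trans hx.1, hx.2.trans_lt hd.2⟩)).le
    have hadd := intervalIntegral.integral_add_adjacent_intervals (hint _ h₀ _ hyt)
      (hint _ hyt _ hd)
    linarith [htime t ht]
  · filter_upwards [eventually_ge_atTop t₀] with t ht
    exact (hmaps ht).2.trans hc

theorem tendsto_integral_comp_mul_of_isIntegralCurveOn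
    (hy : IsIntegralCurveOn y (fun _ => f) (Ici t₀)) (hmaps : MapsTo y (Ici t₀) (Ico a b))
    (hf : ContinuousOn f (Ico a b)) (hpos : ∀ x ∈ Ico a b, 0 < f x)
    (hh : ContinuousOn h (Ico a b)) (hint : IntervalIntegrable h volume (y t₀) b) :
    Tendsto (fun t => ∫ u in t₀..t, h (y u) * f (y u)) atTop (nhds (∫ x in y t₀..b, h x)) := by
  have hlim : Tendsto y atTop (nhds b) := tendsto_of_isIntegralCurveOn_of_pos hy hmaps hf hpos
  have h₀b : y t₀ < b := (hmaps self_mem_Ici).2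
  have hwithin : Tendsto y atTop (nhdsWithin b (uIcc (y t₀) b)) := by
    refine tendsto_nhdsWithin_iff.2 ⟨hlim, ?_⟩
    filter_upwards [eventually_ge_atTop t₀, hlim.eventually_const_le h₀b] with t ht h₀t
    exact uIcc_of_le h₀b.le ▸ ⟨h₀t, (hmaps ht).2.le⟩
  have hprim := intervalIntegral.continuousOn_primitive_interval' hint left_mem_uIcc
  refine ((hprim b right_mem_uIcc).tendsto.comp hwithin).congr' ?_
  filter_upwards [eventually_ge_atTop t₀] with t ht
  exact (integral_comp_mul_of_isIntegralCurveOn_Ici hy hmaps hf hh ht).symm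

end AutonomousFlow

theorem rpow_mul_eq_rpow_sub_mul_div_mul {v l m : ℝ} (hv : 0 < v) (hm : m ≠ 0) (p q : ℝ) :
    v ^ p * l = v ^ (p - q) * (l / m) * (v ^ q * m) := by
  rw [mul_mul_mul_comm, ← rpow_add hv, sub_add_cancel, div_mul_cancel₀ l hm]

theorem stmt13_general {ν δ γ s : ℝ} (hγ : γ = δ - ν) (hγpos : 0 < γ) {𝓛 ℓ : ℝ → ℝ}
    (h𝓛pos : ∀ x ∈ Ici (1 : ℝ), 0 < 𝓛 x)
    (h𝓛cont : ContinuousOn 𝓛 (Ici 1)) (hℓcont : ContinuousOn ℓ (Ici 1))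
    (h𝓛sv : IsSlowlyVarying 𝓛) (hℓsv : IsSlowlyVarying ℓ) {y : ℝ → ℝ} (hy0 : y 0 = s)
    (hmaps : MapsTo y (Ici 0) (Ico 0 1))
    (hy : IsIntegralCurveOn y (fun _ x => (1 - x) ^ (1 + ν) * 𝓛 (1 / (1 - x))) (Ici 0)) :
    Tendsto (fun t => exp (∫ u in (0 : ℝ)..t, -(1 - y u) ^ δ * ℓ (1 / (1 - y u)))) atTop
      (nhds (exp (-∫ x in s..(1 : ℝ),
        (1 - x) ^ (γ - 1) * (ℓ (1 / (1 - x)) / 𝓛 (1 / (1 - x)))))) := by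
  have h𝓛pos' : ∀ x ∈ Ico (0 : ℝ) 1, 0 < 𝓛 (1 / (1 - x)) := fun x hx =>
    h𝓛pos _ (one_le_one_div (sub_pos.2 hx.2) (sub_le_self 1 hx.1))
  have hLcont : ContinuousOn (fun x => ℓ x / 𝓛 x) (Ici 1) :=
    hℓcont.div h𝓛cont fun x hx => (h𝓛pos x hx).ne'
  have hint := (hℓsv.div h𝓛sv).intervalIntegrable_one_sub_rpow_mul hLcont hγpos
    (Ico_subset_Icc_self (hmaps self_mem_Ici))
  have hlim := tendsto_integral_comp_mul_of_isIntegralCurveOn hy hmaps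
    (continuousOn_one_sub_rpow_mul_comp_one_div h𝓛cont _)
    (fun x hx => mul_pos (rpow_pos_of_pos (sub_pos.2 hx.2) _) (h𝓛pos' x hx))
    (continuousOn_one_sub_rpow_mul_comp_one_div hLcont _) hint
  rw [hy0] at hlim
  refine (continuous_exp.tendsto _).comp (hlim.neg.congr' ?_)
  filter_upwards [eventually_ge_atTop 0] with t ht
  rw [← intervalIntegral.integral_neg]
  refine intervalIntegral.integral_congr fun u hu => ?_
  have hyu : y u ∈ Ico 0 1 := hmaps (uIcc_of_le ht ▸ hu).1
  have hexp : γ - 1 = δ - (1 + ν) := by rw [hγ]; ring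
  rw [neg_mul, hexp,
    ← rpow_mul_eq_rpow_sub_mul_div_mul (sub_pos.2 hyu.2) (h𝓛pos' _ hyu).ne']

theorem stmt13
    (ν δ γ : ℝ) (hν0 : 0 < ν) (hν1 : ν < 1) (hδ0 : 0 < δ) (hδ1 : δ < 1)
    (hγ : γ = δ - ν)
    (hγpos : 0 < γ)
    (𝓛 ℓ : ℝ → ℝ)
    (h𝓛pos : ∀ x ∈ Ici (1:ℝ), 0 < 𝓛 x) (hℓpos : ∀ x ∈ Ici (1:ℝ), 0 < ℓ x)
    (h𝓛cont : ContinuousOn 𝓛 (Ici 1)) (hℓcont : ContinuousOn ℓ (Ici 1))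
    (h𝓛sv : ∀ lam > (0:ℝ), Tendsto (fun x => 𝓛 (lam * x) / 𝓛 x) atTop (nhds 1))
    (hℓsv : ∀ lam > (0:ℝ), Tendsto (fun x => ℓ (lam * x) / ℓ x) atTop (nhds 1))
    (F : ℝ → ℝ → ℝ)
    (hFmem : ∀ s ∈ Ico (0:ℝ) 1, ∀ t : ℝ, 0 ≤ t → s ≤ F t s ∧ F t s < 1)
    (hF0 : ∀ s ∈ Ico (0:ℝ) 1, F 0 s = s)
    (hFode : ∀ s ∈ Ico (0:ℝ) 1, ∀ t : ℝ, 0 ≤ t →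
      HasDerivAt (fun u => F u s)
        ((1 - F t s) ^ (1 + ν) * 𝓛 (1 / (1 - F t s))) t)
 :
    ∀ s ∈ Ico (0:ℝ) 1,
      Tendsto (fun t => Real.exp (∫ u in (0:ℝ)..t, -(1 - F u s) ^ δ * ℓ (1 / (1 - F u s)))) atTop (nhds (Real.exp (-∫ x in s..(1:ℝ), (1 - x) ^ (γ - 1) * (ℓ (1 / (1 - x)) / 𝓛 (1 / (1 - x)))))) :=
  fun s hs => stmt13_general hγ hγpos h𝓛pos h𝓛cont hℓcont h𝓛sv hℓsv (hF0 s hs)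
    (fun t ht => ⟨hs.1.trans (hFmem s hs t ht).1, (hFmem s hs t ht).2⟩)
    fun t ht => (hFode s hs t ht).hasDerivWithinAt
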